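/- On the rescaled Schwarzschild metric ĝ with Newman-Penrose tetrad l̂ = -√(F/2) ∂_R, n̂ = √(2/F)(∂_u + (R²F/2)∂_R), m̂ = (1/√2)(∂_θ + (i/sinθ)∂_φ), the nonvanishing spin coefficients are ε̂ = m/(2√(2F)), γ̂ = (5mR² - 2R)/(2√(2F)), β̂ = -α̂ = cotθ/(2√2), and κ̂ = σ̂ = λ̂ = τ̂ = ν̂ = π̂ = ρ̂ = μ̂ = 0. -/

import Mathlib

namespace Stmt13

open Complex

/-- Real partial derivative in coordinates `(u, R, θ, φ)` (fields independent of `φ`). -/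
noncomputable def pd (i : Fin 4) (f : ℝ → ℝ → ℝ → ℝ) : ℝ → ℝ → ℝ → ℝ := fun u R θ =>
  if i = 0 then deriv (fun u' => f u' R θ) u
  else if i = 1 then deriv (fun R' => f u R' θ) R
  else if i = 2 then deriv (fun θ' => f u R θ') θ
  else 0

/-- Complex partial derivative in coordinates `(u, R, θ, φ)`. -/
noncomputable def pdC (i : Fin 4) (f : ℝ → ℝ → ℝ → ℂ) : ℝ → ℝ → ℝ → ℂ := fun u R θ =>
  if i = 0 then deriv (fun u' => f u' R θ) u
  else if i = 1 then deriv (fun R' => f u R' θ) R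
  else if i = 2 then deriv (fun θ' => f u R θ') θ
  else 0

/-- Rescaled Schwarzschild metric `ĝ = R²F du² - 2 du dR - dθ² - sin²θ dφ²`, `F = 1-2mR`. -/
noncomputable def ghat (m : ℝ) (a b : Fin 4) : ℝ → ℝ → ℝ → ℝ := fun _ R θ =>
  if a = 0 ∧ b = 0 then R ^ 2 * (1 - 2 * m * R)
  else if (a = 0 ∧ b = 1) ∨ (a = 1 ∧ b = 0) then -1
  else if a = 2 ∧ b = 2 then -1
  else if a = 3 ∧ b = 3 then -(Real.sin θ) ^ 2
  else 0

/-- Inverse metric `ĝ^{ab}`. -/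
noncomputable def ginv (m : ℝ) (a b : Fin 4) : ℝ → ℝ → ℝ → ℝ := fun _ R θ =>
  if (a = 0 ∧ b = 1) ∨ (a = 1 ∧ b = 0) then -1
  else if a = 1 ∧ b = 1 then -(R ^ 2 * (1 - 2 * m * R))
  else if a = 2 ∧ b = 2 then -1
  else if a = 3 ∧ b = 3 then -(1 / (Real.sin θ) ^ 2)
  else 0

/-- Christoffel symbols `Γ^a_{bc}` of `ĝ`. -/
noncomputable def Γ (m : ℝ) (a b c : Fin 4) : ℝ → ℝ → ℝ → ℝ := fun u R θ =>
  (1 / 2) * ∑ d : Fin 4, ginv m a d u R θ *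
    (pd b (ghat m d c) u R θ + pd c (ghat m d b) u R θ - pd d (ghat m b c) u R θ)

/-- The Newman-Penrose tetrad vector `l̂ = -√(F/2) ∂_R`. -/
noncomputable def lv (m : ℝ) (a : Fin 4) : ℝ → ℝ → ℝ → ℂ := fun _ R _ =>
  if a = 1 then -(Real.sqrt ((1 - 2 * m * R) / 2) : ℝ) else 0

/-- The tetrad vector `n̂ = √(2/F) (∂_u + (R²F/2) ∂_R)`. -/
noncomputable def nv (m : ℝ) (a : Fin 4) : ℝ → ℝ → ℝ → ℂ := fun _ R _ =>
  if a = 0 then (Real.sqrt (2 / (1 - 2 * m * R)) : ℝ)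
  else if a = 1 then
    ((Real.sqrt (2 / (1 - 2 * m * R)) * (R ^ 2 * (1 - 2 * m * R) / 2) : ℝ) : ℂ)
  else 0

/-- The tetrad vector `m̂ = (1/√2)(∂_θ + (i/ sin θ) ∂_φ)`. -/
noncomputable def mv (a : Fin 4) : ℝ → ℝ → ℝ → ℂ := fun _ _ θ =>
  if a = 2 then ((1 / Real.sqrt 2 : ℝ) : ℂ)
  else if a = 3 then Complex.I / ((Real.sqrt 2 * Real.sin θ : ℝ) : ℂ)
  else 0

/-- The conjugate tetrad vector `m̄̂`. -/
noncomputable def mbv (a : Fin 4) : ℝ → ℝ → ℝ → ℂ := fun u R θ =>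
  starRingEnd ℂ (mv a u R θ)

/-- The lowered (covector) components `X_a = ĝ_{ab} X^b` of a (complex) vector field. -/
noncomputable def low (m : ℝ) (X : Fin 4 → ℝ → ℝ → ℝ → ℂ) (a : Fin 4) :
    ℝ → ℝ → ℝ → ℂ := fun u R θ =>
  ∑ b : Fin 4, (ghat m a b u R θ : ℂ) * X b u R θ

/-- The contraction `Z^a Y^b ∇_b X_a`, where `∇_b X_a = ∂_b X_a - Γ^c_{ba} X_c`. -/
noncomputable def cont (m : ℝ) (Z Y X : Fin 4 → ℝ → ℝ → ℝ → ℂ) :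
    ℝ → ℝ → ℝ → ℂ := fun u R θ =>
  ∑ a : Fin 4, ∑ b : Fin 4, Z a u R θ * Y b u R θ *
    (pdC b (low m X a) u R θ - ∑ c : Fin 4, (Γ m c b a u R θ : ℂ) * low m X c u R θ)

/-- Explicit partial derivatives of the metric. -/
lemma pd_ghat (m u R θ : ℝ) (i a b : Fin 4) : pd i (ghat m a b) u R θ =
    if i = 1 ∧ a = 0 ∧ b = 0 then 2 * R - 6 * m * R ^ 2
    else if i = 2 ∧ a = 3 ∧ b = 3 then -(2 * Real.sin θ * Real.cos θ)
    else 0 := by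
  have h1 : deriv (fun R' : ℝ => R' ^ 2 * (1 - 2 * m * R')) R = 2 * R - 6 * m * R ^ 2 := by
    have h := ((hasDerivAt_id R).pow 2).mul (((hasDerivAt_id R).const_mul (2 * m)).const_sub 1)
    have h' : HasDerivAt (fun R' : ℝ => R' ^ 2 * (1 - 2 * m * R')) (2 * R - 6 * m * R ^ 2) R := by
      refine h.congr_deriv ?_
      simp
      ring
    exact h'.deriv
  have h2 : deriv (fun θ' : ℝ => -(Real.sin θ') ^ 2) θ = -(2 * Real.sin θ * Real.cos θ) := by
    have h := ((Real.hasDerivAt_sin θ).pow 2).neg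
    have h' : HasDerivAt (fun θ' : ℝ => -(Real.sin θ') ^ 2) (-(2 * Real.sin θ * Real.cos θ)) θ := by
      refine h.congr_deriv ?_
      simp
    exact h'.deriv
  fin_cases i <;> fin_cases a <;> fin_cases b <;> simp [pd, ghat] <;>
    first
      | exact h1
      | simpa using h2

/-- Explicit Christoffel symbols. -/
lemma Γ_eq (m u R θ : ℝ) (hθ : Real.sin θ ≠ 0) (a b c : Fin 4) : Γ m a b c u R θ =
    if a = 0 ∧ b = 0 ∧ c = 0 then R - 3 * m * R ^ 2
    else if a = 1 ∧ b = 0 ∧ c = 0 then R ^ 2 * (1 - 2 * m * R) * (R - 3 * m * R ^ 2)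
    else if a = 1 ∧ b = 0 ∧ c = 1 then -(R - 3 * m * R ^ 2)
    else if a = 1 ∧ b = 1 ∧ c = 0 then -(R - 3 * m * R ^ 2)
    else if a = 2 ∧ b = 3 ∧ c = 3 then -(Real.sin θ * Real.cos θ)
    else if a = 3 ∧ b = 2 ∧ c = 3 then Real.cos θ / Real.sin θ
    else if a = 3 ∧ b = 3 ∧ c = 2 then Real.cos θ / Real.sin θ
    else 0 := by
  simp only [Γ, pd_ghat, Fin.sum_univ_four]
  fin_cases a <;> fin_cases b <;> fin_cases c <;> simp [ginv] <;> first | ring1 | (field_simp)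

lemma low_lv (m : ℝ) (a : Fin 4) : low m (lv m) a = fun _ R _ =>
    if a = 0 then ((Real.sqrt ((1 - 2 * m * R) / 2) : ℝ) : ℂ) else 0 := by
  funext u R θ
  simp only [low, Fin.sum_univ_four]
  fin_cases a <;> simp [ghat, lv]

lemma low_nv (m : ℝ) (a : Fin 4) : low m (nv m) a = fun _ R _ =>
    if a = 0 then ((Real.sqrt (2 / (1 - 2 * m * R)) * (R ^ 2 * (1 - 2 * m * R) / 2) : ℝ) : ℂ)
    else if a = 1 then -((Real.sqrt (2 / (1 - 2 * m * R)) : ℝ) : ℂ) else 0 := by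
  funext u R θ
  simp only [low, Fin.sum_univ_four]
  fin_cases a <;> simp [ghat, nv]
  ring

lemma low_mv (m : ℝ) (a : Fin 4) : low m mv a = fun _ _ θ =>
    if a = 2 then -((1 / Real.sqrt 2 : ℝ) : ℂ)
    else if a = 3 then -Complex.I * ((Real.sin θ / Real.sqrt 2 : ℝ) : ℂ) else 0 := by
  funext u R θ
  simp only [low, Fin.sum_univ_four]
  fin_cases a <;> simp [ghat, mv, -Complex.ofReal_sin]
  by_cases h : Real.sin θ = 0
  · simp [h, -Complex.ofReal_sin]
  · have h' : ((Real.sin θ : ℝ) : ℂ) ≠ 0 := by exact_mod_cast h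
    have h2 : ((Real.sqrt 2 : ℝ) : ℂ) ≠ 0 := by
      exact_mod_cast (Real.sqrt_pos.mpr (by norm_num : (0:ℝ) < 2)).ne'
    field_simp

lemma pdC_low_lv (m u R θ : ℝ) (hF : 0 < 1 - 2 * m * R) (b a : Fin 4) :
    pdC b (low m (lv m) a) u R θ =
    if b = 1 ∧ a = 0 then ((-m / (2 * Real.sqrt ((1 - 2 * m * R) / 2)) : ℝ) : ℂ) else 0 := by
  have h1 : deriv (fun R' : ℝ => ((Real.sqrt ((1 - 2 * m * R') / 2) : ℝ) : ℂ)) R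
      = ((-m / (2 * Real.sqrt ((1 - 2 * m * R) / 2)) : ℝ) : ℂ) := by
    have h0 : HasDerivAt (fun R' : ℝ => (1 - 2 * m * R') / 2) (-m) R := by
      have h := (((hasDerivAt_id R).const_mul (2 * m)).const_sub 1).div_const 2
      refine h.congr_deriv ?_
      ring
    exact (h0.sqrt (by positivity)).ofReal_comp.deriv
  rw [low_lv]
  fin_cases b <;> fin_cases a <;> simp [pdC]
  simpa using h1

lemma pdC_zero (u R θ : ℝ) (b : Fin 4) :
    pdC b (fun _ _ _ => (0 : ℂ)) u R θ = 0 := by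
  fin_cases b <;> simp [pdC]

lemma pdC_low_mv (m u R θ : ℝ) (b a : Fin 4) :
    pdC b (low m mv a) u R θ =
    if b = 2 ∧ a = 3 then -Complex.I * ((Real.cos θ / Real.sqrt 2 : ℝ) : ℂ) else 0 := by
  have h1 : deriv (fun θ' : ℝ => -Complex.I * ((Real.sin θ' / Real.sqrt 2 : ℝ) : ℂ)) θ
      = -Complex.I * ((Real.cos θ / Real.sqrt 2 : ℝ) : ℂ) :=
    (((Real.hasDerivAt_sin θ).div_const (Real.sqrt 2)).ofReal_comp.const_mul (-Complex.I)).deriv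
  rw [low_mv]
  fin_cases b <;> fin_cases a <;> simp [pdC]
  simpa using h1

/-- for the rescaled Schwarzschild metric with the Newman-Penrose tetrad
`l̂ = -√(F/2) ∂_R`, `n̂ = √(2/F)(∂_u + (R²F/2)∂_R)`, `m̂ = (1/√2)(∂_θ + (i/sinθ)∂_φ)`,
the spin coefficients are
`κ̂ = σ̂ = λ̂ = τ̂ = ν̂ = π̂ = ρ̂ = μ̂ = 0`, `ε̂ = m/(2√(2F))`,
`γ̂ = (5mR² - 2R)/(2√(2F))`, `β̂ = -α̂ = cot θ/(2√2)`. -/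
theorem rescaled_spin_coefficients (m u R θ : ℝ) (hm : 0 < m)
    (hF : 0 < 1 - 2 * m * R) (hθ : Real.sin θ ≠ 0) :
    let F : ℝ := 1 - 2 * m * R
    -- κ̂ = m̂^a l̂^b ∇_b l̂_a = 0
    cont m mv (lv m) (lv m) u R θ = 0 ∧
    -- σ̂ = m̂^a m̂^b ∇_b l̂_a = 0
    cont m mv mv (lv m) u R θ = 0 ∧
    -- ρ̂ = m̂^a m̄̂^b ∇_b l̂_a = 0
    cont m mv mbv (lv m) u R θ = 0 ∧
    -- τ̂ = m̂^a n̂^b ∇_b l̂_a = 0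
    cont m mv (nv m) (lv m) u R θ = 0 ∧
    -- ν̂ = -m̄̂^a n̂^b ∇_b n̂_a = 0
    -cont m mbv (nv m) (nv m) u R θ = 0 ∧
    -- λ̂ = -m̄̂^a m̄̂^b ∇_b n̂_a = 0
    -cont m mbv mbv (nv m) u R θ = 0 ∧
    -- μ̂ = -m̄̂^a m̂^b ∇_b n̂_a = 0
    -cont m mbv mv (nv m) u R θ = 0 ∧
    -- π̂ = -m̄̂^a l̂^b ∇_b n̂_a = 0
    -cont m mbv (lv m) (nv m) u R θ = 0 ∧
    -- ε̂ = ½(n̂^a l̂^b ∇_b l̂_a - m̄̂^a l̂^b ∇_b m̂_a) = m/(2√(2F))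
    (1 / 2 : ℂ) * (cont m (nv m) (lv m) (lv m) u R θ - cont m mbv (lv m) mv u R θ)
      = ((m / (2 * Real.sqrt (2 * F)) : ℝ) : ℂ) ∧
    -- γ̂ = ½(n̂^a n̂^b ∇_b l̂_a - m̄̂^a n̂^b ∇_b m̂_a) = (5mR² - 2R)/(2√(2F))
    (1 / 2 : ℂ) * (cont m (nv m) (nv m) (lv m) u R θ - cont m mbv (nv m) mv u R θ)
      = (((5 * m * R ^ 2 - 2 * R) / (2 * Real.sqrt (2 * F)) : ℝ) : ℂ) ∧
    -- β̂ = ½(n̂^a m̂^b ∇_b l̂_a - m̄̂^a m̂^b ∇_b m̂_a) = cot θ/(2√2)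
    (1 / 2 : ℂ) * (cont m (nv m) mv (lv m) u R θ - cont m mbv mv mv u R θ)
      = ((Real.cos θ / Real.sin θ / (2 * Real.sqrt 2) : ℝ) : ℂ) ∧
    -- α̂ = ½(n̂^a m̄̂^b ∇_b l̂_a - m̄̂^a m̄̂^b ∇_b m̂_a) = -cot θ/(2√2)
    (1 / 2 : ℂ) * (cont m (nv m) mbv (lv m) u R θ - cont m mbv mbv mv u R θ)
      = -((Real.cos θ / Real.sin θ / (2 * Real.sqrt 2) : ℝ) : ℂ) := by
  intro F
  have hs : 0 < Real.sqrt ((1 - 2 * m * R) / 2) := Real.sqrt_pos.mpr (by positivity)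
  have hs2 : Real.sqrt ((1 - 2 * m * R) / 2) ^ 2 = (1 - 2 * m * R) / 2 :=
    Real.sq_sqrt (by positivity)
  have ht : Real.sqrt (2 / (1 - 2 * m * R)) = 1 / Real.sqrt ((1 - 2 * m * R) / 2) := by
    rw [one_div, ← Real.sqrt_inv, inv_div]
  have hw : Real.sqrt (2 * F) = 2 * Real.sqrt ((1 - 2 * m * R) / 2) := by
    rw [show 2 * F = 2 ^ 2 * ((1 - 2 * m * R) / 2) by simp only [F]; ring,
      Real.sqrt_mul (by positivity), Real.sqrt_sq (by norm_num)]
  have hq : 0 < Real.sqrt 2 := Real.sqrt_pos.mpr (by norm_num)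
  have hq2 : Real.sqrt 2 ^ 2 = 2 := Real.sq_sqrt (by norm_num)
  rw [hw]
  simp only [cont, Fin.sum_univ_four, Γ_eq m u R θ hθ, pdC_low_lv m u R θ hF, pdC_low_mv]
  simp only [low_lv, low_mv]
  simp only [low_nv]
  simp only [lv, nv, mv, mbv, ht]
  generalize Real.sqrt ((1 - 2 * m * R) / 2) = s at *
  generalize Real.sqrt 2 = q at *
  generalize Real.sin θ = S at *
  generalize Real.cos θ = C at *
  have hs' : (s : ℂ) ≠ 0 := by exact_mod_cast hs.ne'
  have hq' : (q : ℂ) ≠ 0 := by exact_mod_cast hq.ne'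
  have hS' : (S : ℂ) ≠ 0 := by exact_mod_cast hθ
  have hs2' : (s : ℂ) ^ 2 = (1 - 2 * m * R) / 2 := by exact_mod_cast hs2
  have hq2' : (q : ℂ) ^ 2 = 2 := by exact_mod_cast hq2
  refine ⟨?_, ?_, ?_, ?_, ?_, ?_, ?_, ?_, ?_, ?_, ?_, ?_⟩
  all_goals simp [pdC_zero]
  · field_simp
    try ring
  · have hF' : (1 - 2 * m * R : ℂ) = 2 * s ^ 2 := by rw [hs2']; ring
    rw [hF']
    field_simp
    try ring
  · field_simp
    simp only [I_sq, hq2']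
    ring
  · field_simp
    simp only [I_sq, hq2']
    ring

end Stmt13
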